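/- Let n ∈ ℕ, d ∈ ℝ, p ∈ S^d(ℝⁿ × ℝⁿ), and u ∈ C₀^∞(ℝⁿ). Then for every x ∈ ℝⁿ, Op(p)u(x) = lim_{λ→0} (2π)^{−n} ∫_{ℝⁿ} ∫_{ℝⁿ} e^{i ξ·(x−y)} e^{−λ² |ξ|²} p(x,ξ) u(y) dy dξ, where for each λ ≠ 0 the double integral converges absolutely. -/

import Mathlib

/- STATEMENT 9: Gaussian-regularization identity
   Op(p)u(x) = lim_{λ→0} (2π)^{−n} ∫∫ e^{iξ·(x−y)} e^{−λ²|ξ|²} p(x,ξ) u(y) dy dξ,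
   with absolute convergence of the double integral for λ ≠ 0. -/

noncomputable section
open MeasureTheory Metric Set Complex
open scoped Topology

/-- `ℝⁿ` with the Euclidean norm. -/
abbrev Rn (n : ℕ) : Type := EuclideanSpace ℝ (Fin n)

variable {n : ℕ}

/-- The real dot product `a·b = Σ aⱼ bⱼ` on `ℝⁿ`. -/
def dotR (a b : Rn n) : ℝ := ∑ j, a j * b j
/-- The Japanese bracket `⟨ξ⟩ = (1 + |ξ|²)^{1/2}`. -/
def jap (ξ : Rn n) : ℝ := Real.sqrt (1 + ‖ξ‖ ^ 2)

/-- Directional derivative, as an operation on functions. -/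
def pderivDir (v : Rn n × Rn n) (f : Rn n × Rn n → ℂ) : Rn n × Rn n → ℂ :=
  fun q => fderiv ℝ f q v

/-- The list of directions encoding a multi-index `α`. -/
def multiDirs (mk : Fin n → Rn n × Rn n) (α : Fin n → ℕ) : List (Rn n × Rn n) :=
  (List.finRange n).flatMap fun j => List.replicate (α j) (mk j)

/-- The `i`-th coordinate direction in the `x`-variable. -/
def dirX (i : Fin n) : Rn n × Rn n := (EuclideanSpace.single i 1, 0)
/-- The `i`-th coordinate direction in the `ξ`-variable. -/
def dirXi (i : Fin n) : Rn n × Rn n := (0, EuclideanSpace.single i 1)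

/-- The iterated partial derivative `∂_x^β ∂_ξ^α p`. -/
def mderiv (β α : Fin n → ℕ) (p : Rn n → Rn n → ℂ) : Rn n × Rn n → ℂ :=
  (multiDirs dirX β ++ multiDirs dirXi α).foldr pderivDir fun q => p q.1 q.2

/-- The Hörmander symbol class `S^d(ℝⁿ × ℝⁿ)`. -/
def IsSymbol (n : ℕ) (d : ℝ) (p : Rn n → Rn n → ℂ) : Prop :=
  ContDiff ℝ (⊤ : ℕ∞) (fun q : Rn n × Rn n => p q.1 q.2) ∧
    ∀ α β : Fin n → ℕ, ∃ C : ℝ, ∀ x ξ : Rn n,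
      jap ξ ^ (((∑ j, α j : ℕ) : ℝ) - d) * ‖mderiv β α p (x, ξ)‖ ≤ C

/-- The Fourier transform `𝔉u(ξ) = ∫ e^{−i y·ξ} u(y) dy`. -/
def fourierT (n : ℕ) (u : Rn n → ℂ) (ξ : Rn n) : ℂ :=
  ∫ y : Rn n, Complex.exp (-(Complex.I * (dotR y ξ : ℂ))) * u y

/-- The pseudodifferential operator
`Op(p)u(x) = (2π)^{−n} ∫ e^{i x·ξ} p(x,ξ) 𝔉u(ξ) dξ`. -/
def Op (n : ℕ) (p : Rn n → Rn n → ℂ) (u : Rn n → ℂ) (x : Rn n) : ℂ :=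
  ((2 * Real.pi : ℂ) ^ n)⁻¹ *
    ∫ ξ : Rn n, Complex.exp (Complex.I * (dotR x ξ : ℂ)) * p x ξ * fourierT n u ξ

/- Integrating in `y` first turns the double integral into `∫ e^{−λ²|ξ|²} e^{ix·ξ} p(x,ξ) 𝔉u(ξ) dξ`.
Since `𝔉u` is a Schwartz function, it absorbs the polynomial growth of `p(x,·)`, so the integrand
without its Gaussian factor is integrable and dominates the regularized ones: let `λ → 0`. For fixed
`λ ≠ 0` it is the Gaussian instead that absorbs the growth of `p(x,·)`, uniformly in `y`. -/

open Filter Asymptotics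
open scoped SchwartzMap FourierTransform

section PolynomialGrowth

variable {E : Type*} [NormedAddCommGroup E] {b : ℝ}

lemma isBigO_exp_neg_mul_norm_sq_cocompact [ProperSpace E] (hb : 0 < b) (s : ℝ) :
    (fun x : E => Real.exp (-(b * ‖x‖ ^ 2))) =O[cocompact E] fun x => (1 + ‖x‖ ^ 2) ^ s := by
  have h_tendsto : Tendsto (fun x : E => 1 + ‖x‖ ^ 2) (cocompact E) atTop :=
    tendsto_atTop_add_const_left _ _
      ((tendsto_pow_atTop two_ne_zero).comp tendsto_norm_cocompact_atTop)
  have h_shift (x : E) : Real.exp (-(b * ‖x‖ ^ 2)) =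
      Real.exp b * Real.exp (-b * (1 + ‖x‖ ^ 2)) := by
    rw [← Real.exp_add]
    ring_nf
  simp_rw [h_shift]
  exact ((isLittleO_exp_neg_mul_rpow_atTop hb s).comp_tendsto h_tendsto).isBigO.const_mul_left _

variable [NormedSpace ℝ E] [FiniteDimensional ℝ E] [MeasurableSpace E] [BorelSpace E]
  {μ : Measure E} [μ.IsAddHaarMeasure]

lemma integrable_exp_neg_mul_norm_sq_mul_rpow (hb : 0 < b) (s : ℝ) :
    Integrable (fun x : E => Real.exp (-(b * ‖x‖ ^ 2)) * (1 + ‖x‖ ^ 2) ^ s) μ := by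
  have : ProperSpace E := FiniteDimensional.proper_real E
  set r : ℝ := Module.finrank ℝ E + 1
  have h_cont : Continuous fun x : E => Real.exp (-(b * ‖x‖ ^ 2)) * (1 + ‖x‖ ^ 2) ^ s :=
    (by fun_prop : Continuous fun x : E => Real.exp (-(b * ‖x‖ ^ 2))).mul
      ((by fun_prop : Continuous fun x : E => 1 + ‖x‖ ^ 2).rpow_const
        fun x => Or.inl (zero_lt_one_add_norm_sq x).ne')
  have h_decay : (fun x : E => Real.exp (-(b * ‖x‖ ^ 2)) * (1 + ‖x‖ ^ 2) ^ s)
      =O[cocompact E] fun x => (1 + ‖x‖ ^ 2) ^ (-r / 2) := by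
    refine ((isBigO_exp_neg_mul_norm_sq_cocompact hb (-r / 2 - s)).mul
      (isBigO_refl (fun x : E => (1 + ‖x‖ ^ 2) ^ s) _)).congr_right fun x => ?_
    rw [← Real.rpow_add (zero_lt_one_add_norm_sq x), sub_add_cancel]
  exact h_cont.locallyIntegrable.integrable_of_isBigO_cocompact h_decay
    ((integrable_rpow_neg_one_add_norm_sq (lt_add_one _)).integrableAtFilter _)

lemma integrable_exp_neg_mul_norm_sq_smul {F : Type*} [NormedAddCommGroup F] [NormedSpace ℝ F]
    {s : ℝ} {a : E → F} (ha : AEStronglyMeasurable a μ)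
    (h_growth : a =O[⊤] fun x => (1 + ‖x‖ ^ 2) ^ s) (hb : 0 < b) :
    Integrable (fun x => Real.exp (-(b * ‖x‖ ^ 2)) • a x) μ := by
  have h_gauss : Continuous fun x : E => Real.exp (-(b * ‖x‖ ^ 2)) := by fun_prop
  exact ((isBigO_refl _ _).smul (h_growth.mono le_top)).integrable
    (h_gauss.aestronglyMeasurable.smul ha) (integrable_exp_neg_mul_norm_sq_mul_rpow hb s)

end PolynomialGrowth

lemma integrable_smul_schwartzMap {𝕜 E F : Type*} [NormedField 𝕜] [NormedAddCommGroup E]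
    [InnerProductSpace ℝ E] [MeasurableSpace E] [BorelSpace E] [SecondCountableTopology E]
    [NormedAddCommGroup F] [NormedSpace ℝ F] [NormedSpace 𝕜 F] {μ : Measure E}
    [μ.HasTemperateGrowth] {s : ℝ} {a : E → 𝕜} (ha : AEStronglyMeasurable a μ)
    (h_growth : a =O[⊤] fun x => (1 + ‖x‖ ^ 2) ^ s) (v : 𝓢(E, F)) :
    Integrable (fun x => a x • v x) μ := by
  have h_weighted : Integrable (fun x => (1 + ‖x‖ ^ 2) ^ s • v x) μ :=
    (SchwartzMap.smulLeftCLM F (fun x : E => (1 + ‖x‖ ^ 2) ^ s) v).integrable.congr <|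
      .of_forall <|
        SchwartzMap.smulLeftCLM_apply_apply (Function.hasTemperateGrowth_one_add_norm_sq_rpow E s) v
  exact ((h_growth.mono le_top).smul (isBigO_refl v _)).integrable
    (ha.smul v.continuous.aestronglyMeasurable) h_weighted

lemma tendsto_integral_exp_neg_sq_mul_norm_sq_smul {E F : Type*} [NormedAddCommGroup E]
    [MeasurableSpace E] [OpensMeasurableSpace E] [NormedAddCommGroup F] [NormedSpace ℝ F]
    {μ : Measure E} {f : E → F} (hf : Integrable f μ) :
    Tendsto (fun lam : ℝ => ∫ x, Real.exp (-(lam ^ 2 * ‖x‖ ^ 2)) • f x ∂μ)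
      (𝓝 0) (𝓝 (∫ x, f x ∂μ)) := by
  refine tendsto_integral_filter_of_dominated_convergence (fun x => ‖f x‖) ?_ ?_ hf.norm ?_
  · refine .of_forall fun lam => AEStronglyMeasurable.smul ?_ hf.aestronglyMeasurable
    exact (by fun_prop : Measurable fun x : E => Real.exp (-(lam ^ 2 * ‖x‖ ^ 2)))
      |>.aestronglyMeasurable
  · refine .of_forall fun lam => .of_forall fun x => ?_
    rw [norm_smul, Real.norm_of_nonneg (Real.exp_nonneg _)]
    exact mul_le_of_le_one_left (norm_nonneg _)
      (Real.exp_le_one_iff.mpr (neg_nonpos.mpr (by positivity)))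
  · refine .of_forall fun x => ?_
    have h_cont : Continuous fun lam : ℝ => Real.exp (-(lam ^ 2 * ‖x‖ ^ 2)) • f x := by fun_prop
    simpa using h_cont.tendsto 0

lemma integrable_exp_I_mul_mul {α : Type*} [MeasurableSpace α] {μ : Measure α} {φ : α → ℝ}
    {f : α → ℂ} (hφ : Measurable φ) (hf : Integrable f μ) :
    Integrable (fun a => exp (I * φ a) * f a) μ :=
  hf.bdd_mul (c := 1) (by fun_prop) <|
    .of_forall fun a => (mul_comm I (φ a : ℂ) ▸ norm_exp_ofReal_mul_I (φ a)).le

section DotProduct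

lemma dotR_eq_inner (a b : Rn n) : dotR a b = inner ℝ a b := by
  simp [dotR, PiLp.inner_apply, mul_comm]

@[fun_prop]
lemma measurable_dotR {α : Type*} [MeasurableSpace α] {f g : α → Rn n} (hf : Measurable f)
    (hg : Measurable g) : Measurable fun a => dotR (f a) (g a) := by
  simp only [dotR_eq_inner]
  fun_prop

lemma exp_I_mul_dotR_sub (x y ξ : Rn n) :
    exp (I * dotR ξ (x - y)) = exp (I * dotR x ξ) * exp (-(I * dotR y ξ)) := by
  rw [← exp_add, dotR_eq_inner, dotR_eq_inner, dotR_eq_inner, inner_sub_right,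
    real_inner_comm x, real_inner_comm y]
  push_cast
  ring_nf

lemma jap_rpow (ξ : Rn n) (d : ℝ) : jap ξ ^ d = (1 + ‖ξ‖ ^ 2) ^ (d / 2) := by
  rw [jap, Real.sqrt_eq_rpow, ← Real.rpow_mul (zero_lt_one_add_norm_sq ξ).le]
  ring_nf

end DotProduct

section Symbol

variable {d : ℝ} {p : Rn n → Rn n → ℂ}

lemma mderiv_zero_zero (p : Rn n → Rn n → ℂ) (x ξ : Rn n) : mderiv 0 0 p (x, ξ) = p x ξ := by
  have h_nil (mk : Fin n → Rn n × Rn n) : multiDirs mk 0 = [] := by simp [multiDirs]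
  simp [mderiv, h_nil]

lemma IsSymbol.continuous_right (hp : IsSymbol n d p) (x : Rn n) : Continuous (p x) :=
  hp.1.continuous.comp (Continuous.prodMk_right x)

lemma IsSymbol.isBigO_jap_rpow (hp : IsSymbol n d p) (x : Rn n) :
    p x =O[⊤] fun ξ => jap ξ ^ d := by
  obtain ⟨C, hC⟩ := hp.2 0 0
  refine isBigO_top.mpr ⟨C, fun ξ => ?_⟩
  have h_pos : 0 < jap ξ := Real.sqrt_pos.mpr (zero_lt_one_add_norm_sq ξ)
  have h_bound : (jap ξ ^ d)⁻¹ * ‖p x ξ‖ ≤ C := by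
    simpa [mderiv_zero_zero, Real.rpow_neg h_pos.le] using hC x ξ
  rw [Real.norm_of_nonneg (by positivity), mul_comm]
  exact (inv_mul_le_iff₀ (by positivity)).mp h_bound

end Symbol

section Fourier

lemma fourierT_eq_fourier (u : Rn n → ℂ) (ξ : Rn n) :
    fourierT n u ξ = 𝓕 u ((2 * Real.pi)⁻¹ • ξ) := by
  rw [Real.fourier_eq', fourierT]
  refine integral_congr_ae (.of_forall fun y => ?_)
  have h_phase : -2 * Real.pi * inner ℝ y ((2 * Real.pi)⁻¹ • ξ) = -dotR y ξ := by
    rw [inner_smul_right, dotR_eq_inner]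
    field_simp
  dsimp only
  rw [h_phase, smul_eq_mul, ofReal_neg, neg_mul, mul_comm I]

lemma exists_schwartzMap_coe_eq_fourierT (u : 𝓢(Rn n, ℂ)) :
    ∃ v : 𝓢(Rn n, ℂ), ⇑v = fourierT n u := by
  have h_scale : (2 * Real.pi)⁻¹ ≠ 0 := by positivity
  refine ⟨SchwartzMap.compCLMOfContinuousLinearEquiv ℂ
    (ContinuousLinearEquiv.smulLeft (Units.mk0 _ h_scale)) (𝓕 u), funext fun ξ => ?_⟩
  rw [fourierT_eq_fourier, ← SchwartzMap.fourier_coe]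
  rfl

end Fourier

section Regularization

variable {a : Rn n → ℂ} {d : ℝ}

lemma integrable_gaussian_oscillatory (ha : AEStronglyMeasurable a)
    (h_growth : a =O[⊤] fun ξ => jap ξ ^ d) {u : Rn n → ℂ} (hu : Integrable u) (x : Rn n)
    {lam : ℝ} (hlam : lam ≠ 0) :
    Integrable fun q : Rn n × Rn n =>
      exp (I * dotR q.1 (x - q.2)) * exp (-(lam ^ 2 * ‖q.1‖ ^ 2 : ℝ)) * a q.1 * u q.2 := by
  simp only [jap_rpow] at h_growth
  have h_amplitude : Integrable fun q : Rn n × Rn n =>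
      Real.exp (-(lam ^ 2 * ‖q.1‖ ^ 2)) • a q.1 * u q.2 :=
    (integrable_exp_neg_mul_norm_sq_smul ha h_growth (by positivity)).mul_prod hu
  have h_phase : Measurable fun q : Rn n × Rn n => dotR q.1 (x - q.2) := by fun_prop
  simpa only [real_smul, ofReal_exp, ofReal_neg, mul_assoc]
    using integrable_exp_I_mul_mul h_phase h_amplitude

lemma integrable_exp_I_mul_mul_fourierT (ha : AEStronglyMeasurable a)
    (h_growth : a =O[⊤] fun ξ => jap ξ ^ d) (u : 𝓢(Rn n, ℂ)) (x : Rn n) :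
    Integrable fun ξ => exp (I * dotR x ξ) * a ξ * fourierT n u ξ := by
  simp only [jap_rpow] at h_growth
  obtain ⟨v, hv⟩ := exists_schwartzMap_coe_eq_fourierT u
  have h_phase : Measurable fun ξ => dotR x ξ := by fun_prop
  simpa only [← hv, smul_eq_mul, mul_assoc]
    using integrable_exp_I_mul_mul h_phase (integrable_smul_schwartzMap ha h_growth v)

lemma integral_gaussian_oscillatory (a u : Rn n → ℂ) (x ξ : Rn n) (lam : ℝ) :
    ∫ y, exp (I * dotR ξ (x - y)) * exp (-(lam ^ 2 * ‖ξ‖ ^ 2 : ℝ)) * a ξ * u y =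
      Real.exp (-(lam ^ 2 * ‖ξ‖ ^ 2)) • (exp (I * dotR x ξ) * a ξ * fourierT n u ξ) := by
  rw [fourierT, real_smul, ← integral_const_mul, ← integral_const_mul]
  refine integral_congr_ae (.of_forall fun y => ?_)
  simp only [exp_I_mul_dotR_sub, ofReal_exp, ofReal_neg]
  ring

end Regularization

theorem statement9_general
    (n : ℕ) (d : ℝ) (p : Rn n → Rn n → ℂ) (x : Rn n) (hp_meas : AEStronglyMeasurable (p x))
    (hp_growth : p x =O[⊤] fun ξ => jap ξ ^ d) (u : 𝓢(Rn n, ℂ)) :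
    (∀ lam : ℝ, lam ≠ 0 →
      Integrable (fun q : Rn n × Rn n =>
        exp (I * (dotR q.1 (x - q.2) : ℂ)) *
          exp (-(lam ^ 2 * ‖q.1‖ ^ 2 : ℝ)) * p x q.1 * u q.2)) ∧
    Tendsto
      (fun lam : ℝ =>
        ((2 * Real.pi : ℂ) ^ n)⁻¹ *
          ∫ ξ : Rn n, ∫ y : Rn n,
            exp (I * (dotR ξ (x - y) : ℂ)) *
              exp (-(lam ^ 2 * ‖ξ‖ ^ 2 : ℝ)) * p x ξ * u y)
      (𝓝[≠] (0 : ℝ)) (𝓝 (Op n p u x)) := by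
  refine ⟨fun lam => integrable_gaussian_oscillatory hp_meas hp_growth u.integrable x, ?_⟩
  simp_rw [integral_gaussian_oscillatory]
  have h_limit := tendsto_integral_exp_neg_sq_mul_norm_sq_smul
    (integrable_exp_I_mul_mul_fourierT hp_meas hp_growth u x)
  exact (h_limit.mono_left nhdsWithin_le_nhds).const_mul _

theorem statement9
    (n : ℕ) (d : ℝ)
    (p : Rn n → Rn n → ℂ) (hp : IsSymbol n d p)
    (u : Rn n → ℂ) (hu : ContDiff ℝ (⊤ : ℕ∞) u) (husupp : HasCompactSupport u)
    (x : Rn n) :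
    -- absolute convergence of the double integral for every `λ ≠ 0`
    (∀ lam : ℝ, lam ≠ 0 →
      Integrable (fun q : Rn n × Rn n =>
        Complex.exp (Complex.I * (dotR q.1 (x - q.2) : ℂ)) *
          Complex.exp (-(lam ^ 2 * ‖q.1‖ ^ 2 : ℝ)) * p x q.1 * u q.2)) ∧
    -- `Op(p)u(x)` is the limit, as `λ → 0`, of the regularized integrals
    Filter.Tendsto
      (fun lam : ℝ =>
        ((2 * Real.pi : ℂ) ^ n)⁻¹ *
          ∫ ξ : Rn n, ∫ y : Rn n,
            Complex.exp (Complex.I * (dotR ξ (x - y) : ℂ)) *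
              Complex.exp (-(lam ^ 2 * ‖ξ‖ ^ 2 : ℝ)) * p x ξ * u y)
      (𝓝[≠] (0 : ℝ)) (𝓝 (Op n p u x)) :=
  statement9_general n d p x (hp.continuous_right x).aestronglyMeasurable
    (hp.isBigO_jap_rpow x) (husupp.toSchwartzMap hu)
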